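/- arXiv:math/0406504 — 4 statements merged into one kernel-verified Lean document; each statement's English description precedes it below -/
import Mathlib

section
/- Fix k ≥ 2, n ≥ 1, and 0 < ε < 1/2, and let 𝒞 be any nonempty class of functions from {0,1}^n to {0,1}. Then every k-tuple (f_1,…,f_k) with each f_i ∈ 𝒞 that maximizes 𝒫(f_1,…,f_k;ε) over all such k-tuples satisfies f_1 = f_2 = ⋯ = f_k. -/
open Finset

/-- Probability weight of receiving `y` when the source string is `x`: each bit of `x`
is flipped independently with probability `ε`. -/
noncomputable def noiseWt (ε : ℝ) {n : ℕ} (x y : Fin n → Bool) : ℝ :=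
  ∏ j : Fin n, if y j = x j then 1 - ε else ε

/-- A function is balanced if it takes the values `false` and `true` equally often. -/
def BalancedFn {n : ℕ} (f : (Fin n → Bool) → Bool) : Prop :=
  (Finset.univ.filter fun x : Fin n → Bool => f x = false).card =
    (Finset.univ.filter fun x : Fin n → Bool => f x = true).card

/-- The transformation `π_S` : permute coordinates by `π` and flip the bits outside `S`. -/
def piS {n : ℕ} (π : Equiv.Perm (Fin n)) (S : Finset (Fin n)) (x : Fin n → Bool) :
    Fin n → Bool :=
  fun i => if i ∈ S then x (π i) else !(x (π i))

/-- `𝒫(f₁,…,f_k; ε)`: the probability that all `k` parties agree, where the source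
`x` is uniform on `{0,1}^n` and party `i` receives an independent `ε`-corruption `yᵢ` of `x`. -/
noncomputable def agreeProb (ε : ℝ) (n k : ℕ) (fs : Fin k → (Fin n → Bool) → Bool) : ℝ :=
  ((2 : ℝ) ^ n)⁻¹ * ∑ x : Fin n → Bool, ∑ ys : Fin k → Fin n → Bool,
    (∏ i : Fin k, noiseWt ε x (ys i)) *
      (if ∀ i j : Fin k, fs i (ys i) = fs j (ys j) then 1 else 0)


/-- Probability that `f` outputs `b` when the source is `x`. -/
noncomputable def condP (ε : ℝ) {n : ℕ} (b : Bool) (f : (Fin n → Bool) → Bool)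
    (x : Fin n → Bool) : ℝ :=
  ∑ y : Fin n → Bool, noiseWt ε x y * (if f y = b then 1 else 0)

lemma condP_nonneg {ε : ℝ} (h0 : 0 < ε) (h1 : ε < 1 / 2) {n : ℕ} (b : Bool)
    (f : (Fin n → Bool) → Bool) (x : Fin n → Bool) : 0 ≤ condP ε b f x := by
  unfold condP noiseWt
  refine Finset.sum_nonneg fun y _ => mul_nonneg (Finset.prod_nonneg fun j _ => ?_) ?_
  · split_ifs <;> linarith
  · split_ifs <;> norm_num

lemma agree_ind {k n : ℕ} (hk : 2 ≤ k) (fs : Fin k → (Fin n → Bool) → Bool)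
    (ys : Fin k → Fin n → Bool) :
    (if ∀ i j : Fin k, fs i (ys i) = fs j (ys j) then (1 : ℝ) else 0) =
      ∑ b : Bool, ∏ i : Fin k, (if fs i (ys i) = b then (1 : ℝ) else 0) := by
  have i0 : Fin k := ⟨0, by omega⟩
  simp only [Finset.prod_ite_zero, Finset.prod_const_one, Finset.mem_univ, forall_true_left]
  split_ifs with h
  · rw [Finset.sum_eq_single (fs i0 (ys i0))]
    · rw [if_pos]; intro i; exact h i i0
    · intro b _ hb; rw [if_neg]; intro hh; exact hb (hh i0).symm
    · simp
  · symm
    refine Finset.sum_eq_zero fun b _ => if_neg fun hh => h fun i j => (hh i).trans (hh j).symm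

lemma agree_eq {k n : ℕ} (hk : 2 ≤ k) (ε : ℝ) (fs : Fin k → (Fin n → Bool) → Bool) :
    agreeProb ε n k fs = ((2 : ℝ) ^ n)⁻¹ *
      ∑ p : (Fin n → Bool) × Bool, ∏ i : Fin k, condP ε p.2 (fs i) p.1 := by
  unfold agreeProb
  congr 1
  rw [Fintype.sum_prod_type]
  refine Finset.sum_congr rfl fun x _ => ?_
  simp_rw [agree_ind hk fs, Finset.mul_sum, ← Finset.prod_mul_distrib]
  rw [Finset.sum_comm]
  refine Finset.sum_congr rfl fun b _ => ?_
  unfold condP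
  rw [Finset.prod_univ_sum, Fintype.piFinset_univ]

lemma noise_inv {n : ℕ} {ε : ℝ} (h1 : ε < 1 / 2) (z y : Fin n → Bool) :
    ∑ x : Fin n → Bool, noiseWt (-ε / (1 - 2 * ε)) z x * noiseWt ε x y =
      if y = z then 1 else 0 := by
  unfold noiseWt
  simp_rw [← Finset.prod_mul_distrib]
  have := Finset.prod_univ_sum (fun _ : Fin n => (Finset.univ : Finset Bool))
    (fun j b => (if b = z j then 1 - (-ε / (1 - 2 * ε)) else (-ε / (1 - 2 * ε))) *
      (if y j = b then 1 - ε else ε))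
  rw [Fintype.piFinset_univ] at this
  rw [← this]
  have hne : (1 - 2 * ε) ≠ 0 := by linarith
  have key : ∀ j, (∑ b : Bool, (if b = z j then 1 - (-ε / (1 - 2 * ε)) else (-ε / (1 - 2 * ε))) *
      (if y j = b then 1 - ε else ε)) = if y j = z j then 1 else 0 := by
    intro j
    have hd : (-ε / (1 - 2 * ε)) * (1 - 2 * ε) = -ε := div_mul_cancel₀ _ hne
    generalize -ε / (1 - 2 * ε) = d at hd
    cases z j <;> cases y j <;> simp <;>
      first | linear_combination hd | linear_combination -hd
  simp_rw [key]
  rw [Finset.prod_ite_zero]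
  simp [funext_iff]

lemma condP_inj {n : ℕ} {ε : ℝ} (h1 : ε < 1 / 2) (f g : (Fin n → Bool) → Bool)
    (h : ∀ x, condP ε true f x = condP ε true g x) : f = g := by
  have inv : ∀ (f : (Fin n → Bool) → Bool) z,
      ∑ x, noiseWt (-ε / (1 - 2 * ε)) z x * condP ε true f x = if f z = true then 1 else 0 := by
    intro f z
    unfold condP
    simp_rw [Finset.mul_sum, ← mul_assoc]
    rw [Finset.sum_comm]
    simp_rw [← Finset.sum_mul, noise_inv h1]
    simp only [ite_mul, one_mul, zero_mul, Finset.sum_ite_eq', Finset.mem_univ, if_true]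
  funext z
  have e := inv f z
  simp_rw [h, inv g z] at e
  cases hf : f z <;> cases hg : g z <;> simp [hf, hg] at e <;> rfl

lemma prod_le_mean {k : ℕ} (hk : 2 ≤ k) (a : Fin k → ℝ) (ha : ∀ i, 0 ≤ a i) :
    ∏ i, a i ≤ ∑ i, (k : ℝ)⁻¹ * a i ^ k := by
  have hk0 : k ≠ 0 := by omega
  have := Real.geom_mean_le_arith_mean_weighted Finset.univ (fun _ : Fin k => (k : ℝ)⁻¹)
    (fun i => a i ^ k) (fun _ _ => by positivity) (by simp [hk0]) (fun i _ => pow_nonneg (ha i) k)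
  simpa [Real.pow_rpow_inv_natCast (ha _) hk0] using this

lemma eq_of_prod_eq_mean {k : ℕ} (hk : 2 ≤ k) (a : Fin k → ℝ) (ha : ∀ i, 0 ≤ a i)
    (h : ∏ i, a i = ∑ i, (k : ℝ)⁻¹ * a i ^ k) (i j : Fin k) : a i = a j := by
  have hk0 : k ≠ 0 := by omega
  have := Real.geom_mean_eq_arith_mean_weighted_iff_of_pos' Finset.univ (fun _ : Fin k => (k : ℝ)⁻¹)
    (fun i => a i ^ k) (fun _ _ => by positivity) (by simp [hk0]) (fun i _ => pow_nonneg (ha i) k)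
  simp only [Real.pow_rpow_inv_natCast (ha _) hk0] at this
  have h2 := this.1 h
  have e := (h2 i (Finset.mem_univ _)).trans (h2 j (Finset.mem_univ _)).symm
  exact (pow_left_inj₀ (ha i) (ha j) hk0).1 e

/-- Every maximizer of the agreement probability over tuples from any class `𝒞`
has all parties using the same function. -/
theorem statement5 (k n : ℕ) (hk : 2 ≤ k) (hn : 1 ≤ n) (ε : ℝ) (hε₀ : 0 < ε)
    (hε₁ : ε < 1 / 2) (𝒞 : Set ((Fin n → Bool) → Bool)) (h𝒞 : 𝒞.Nonempty)
    (fs : Fin k → (Fin n → Bool) → Bool) (hfs : ∀ i, fs i ∈ 𝒞)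
    (hmax : ∀ gs : Fin k → (Fin n → Bool) → Bool, (∀ i, gs i ∈ 𝒞) →
      agreeProb ε n k gs ≤ agreeProb ε n k fs) :
    ∀ i j : Fin k, fs i = fs j := by
  have hk0 : (k : ℝ) ≠ 0 := by
    have : k ≠ 0 := by omega
    exact_mod_cast this
  have hpos : (0 : ℝ) < ((2 : ℝ) ^ n)⁻¹ := by positivity
  set S : (Fin k → (Fin n → Bool) → Bool) → ℝ := fun gs =>
    ∑ p : (Fin n → Bool) × Bool, ∏ i : Fin k, condP ε p.2 (gs i) p.1 with hS
  have hle : ∀ i, S (fun _ => fs i) ≤ S fs := by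
    intro i
    have := hmax (fun _ => fs i) (fun _ => hfs i)
    rw [agree_eq hk, agree_eq hk] at this
    exact le_of_mul_le_mul_left this hpos
  have hpt : ∀ p ∈ (Finset.univ : Finset ((Fin n → Bool) × Bool)),
      ∏ i : Fin k, condP ε p.2 (fs i) p.1 ≤ ∑ i, (k : ℝ)⁻¹ * condP ε p.2 (fs i) p.1 ^ k :=
    fun p _ => prod_le_mean hk _ fun i => condP_nonneg hε₀ hε₁ _ _ _
  have hsum : ∑ p : (Fin n → Bool) × Bool, ∑ i, (k : ℝ)⁻¹ * condP ε p.2 (fs i) p.1 ^ k ≤ S fs := by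
    rw [Finset.sum_comm]
    calc _ = ∑ i, (k : ℝ)⁻¹ * S (fun _ => fs i) := by
          refine Finset.sum_congr rfl fun i _ => ?_
          simp [hS, Finset.mul_sum]
      _ ≤ ∑ i : Fin k, (k : ℝ)⁻¹ * S fs :=
          Finset.sum_le_sum fun i _ => mul_le_mul_of_nonneg_left (hle i) (by positivity)
      _ = S fs := by simp [hk0]
  have heq := (Finset.sum_eq_sum_iff_of_le hpt).1 (le_antisymm (Finset.sum_le_sum hpt) hsum)
  intro i j
  refine condP_inj hε₁ _ _ fun x => ?_
  exact eq_of_prod_eq_mean hk (fun i => condP ε true (fs i) x)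
    (fun i => condP_nonneg hε₀ hε₁ _ _ _) (heq (x, true) (Finset.mem_univ _)) i j
end

section
/- For every odd n ≥ 1, ε ∈ (0,1/2), and k ≥ 1, letting q = 1 − Pr[Bin(n,ε) > n/2] (where Bin(n,ε) is a binomial random variable with n trials and success probability ε), the probability 𝒫_k(Maj_n;ε) satisfies 2^{1−n} q^k ≤ 𝒫_k(Maj_n;ε) ≤ 2 q^k. In particular, 𝒫_k(Maj_n;ε) = Θ((1 − Pr[Bin(n,ε) > n/2])^k) as k → ∞ with n and ε fixed. -/
open Finset

/-- The number of ones (`true` coordinates) in a string. -/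
def countOnes {n : ℕ} (x : Fin n → Bool) : ℕ := ∑ i : Fin n, cond (x i) 1 0

/-- The majority function on `n` bits: `1` iff more than `n/2` of the bits are `1`. -/
def majn (n : ℕ) : (Fin n → Bool) → Bool := fun x => decide (n < 2 * countOnes x)


lemma noiseWt_nonneg {ε : ℝ} (h0 : 0 < ε) (h1 : ε < 1/2) {n : ℕ} (x y : Fin n → Bool) :
    0 ≤ noiseWt ε x y := by
  unfold noiseWt
  apply Finset.prod_nonneg
  intro j _
  split_ifs <;> linarith

lemma noise_sum_succ (ε : ℝ) {n : ℕ} (x : Fin (n+1) → Bool) (g : (Fin (n+1) → Bool) → ℝ) :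
    ∑ y, noiseWt ε x y * g y = ∑ b : Bool, (if b = x 0 then 1 - ε else ε) *
      ∑ y : Fin n → Bool, noiseWt ε (fun i => x i.succ) y * g (Fin.cons b y) := by
  rw [← (Fin.consEquiv (fun _ : Fin (n+1) => Bool)).sum_comp, Fintype.sum_prod_type]
  refine Finset.sum_congr rfl fun b _ => ?_
  rw [Finset.mul_sum]
  refine Finset.sum_congr rfl fun y _ => ?_
  change noiseWt ε x (Fin.cons b y : Fin (n+1) → Bool) * g (Fin.cons b y) = _
  simp only [noiseWt, Fin.prod_univ_succ, Fin.cons_zero, Fin.cons_succ]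
  ring

lemma noise_mono {ε : ℝ} (h0 : 0 < ε) (h1 : ε < 1/2) : ∀ {n : ℕ} (x : Fin n → Bool)
    (g : (Fin n → Bool) → ℝ) (_ : Antitone g),
    ∑ y, noiseWt ε x y * g y ≤ ∑ y, noiseWt ε (fun _ => false) y * g y := by
  intro n
  induction n with
  | zero =>
    intro x g _
    apply le_of_eq
    congr! 3
  | succ n ih =>
    intro x g hg
    rw [noise_sum_succ, noise_sum_succ]
    have hc : ∀ b : Bool, Antitone fun y : Fin n → Bool => g (Fin.cons b y) := by
      intro b y z hyz
      apply hg
      intro i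
      refine Fin.cases ?_ (fun j => ?_) i
      · simp
      · simpa using hyz j
    have A := fun b => ih (fun i => x i.succ) _ (hc b)
    have B : ∑ y : Fin n → Bool, noiseWt ε (fun _ => false) y * g (Fin.cons true y) ≤
        ∑ y : Fin n → Bool, noiseWt ε (fun _ => false) y * g (Fin.cons false y) := by
      refine Finset.sum_le_sum fun y _ => mul_le_mul_of_nonneg_left ?_ (noiseWt_nonneg h0 h1 _ _)
      apply hg
      intro i
      refine Fin.cases ?_ (fun j => ?_) i
      · simp
      · simp
    have At := A true
    have Af := A false
    simp only [Fintype.sum_bool]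
    cases x 0 <;> simp <;> nlinarith

lemma noise_total (ε : ℝ) {n : ℕ} (x : Fin n → Bool) : ∑ y, noiseWt ε x y = 1 := by
  unfold noiseWt
  rw [← Fintype.prod_sum (fun (j : Fin n) (b : Bool) => if b = x j then 1 - ε else ε)]
  apply Finset.prod_eq_one
  intro j _
  cases x j <;> simp

lemma countOnes_card {n : ℕ} (y : Fin n → Bool) :
    countOnes y = (Finset.univ.filter fun i => y i = true).card := by
  unfold countOnes
  rw [Finset.card_filter]
  refine Finset.sum_congr rfl fun i _ => ?_
  cases y i <;> simp

lemma noise_zero (ε : ℝ) {n : ℕ} (y : Fin n → Bool) :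
    noiseWt ε (fun _ => false) y = ε ^ countOnes y * (1-ε) ^ (n - countOnes y) := by
  have h := Finset.card_filter_add_card_filter_not (s := (univ : Finset (Fin n))) (fun i => y i = true)
  unfold noiseWt
  rw [countOnes_card]
  rw [Finset.card_univ, Fintype.card_fin] at h
  have h2 : n - (Finset.univ.filter fun i => y i = true).card =
    (Finset.univ.filter fun i => ¬ y i = true).card := by omega
  rw [h2, ← Finset.prod_const, ← Finset.prod_const, Finset.prod_filter, Finset.prod_filter,
    ← Finset.prod_mul_distrib]
  refine Finset.prod_congr rfl fun i _ => ?_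
  cases y i <;> simp

lemma sum_count {n : ℕ} (h : ℕ → ℝ) :
    ∑ y : Fin n → Bool, h (countOnes y) = ∑ j ∈ range (n+1), (n.choose j : ℝ) * h j := by
  have := Finset.sum_powerset_apply_card h (x := (univ : Finset (Fin n)))
  rw [Finset.card_univ, Fintype.card_fin] at this
  simp only [nsmul_eq_mul] at this
  rw [← this]
  refine Finset.sum_nbij' (fun y => univ.filter fun i => y i = true) (fun s i => decide (i ∈ s))
    ?_ ?_ ?_ ?_ ?_
  · simp
  · simp
  · intro y _; ext i; simp
  · intro s _; ext i; simp
  · intro y _; rw [countOnes_card]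

noncomputable def pr (ε : ℝ) {n : ℕ} (b : Bool) (x : Fin n → Bool) : ℝ :=
  ∑ y, noiseWt ε x y * (if majn n y = b then 1 else 0)

lemma pr_zero (ε : ℝ) (n : ℕ) : pr ε (n := n) false (fun _ => false) =
    1 - ∑ j ∈ Finset.range (n + 1),
      if n < 2 * j then (n.choose j : ℝ) * ε ^ j * (1 - ε) ^ (n - j) else 0 := by
  have h := sum_count (n := n) (fun j => if n < 2 * j then ε ^ j * (1 - ε) ^ (n - j) else 0)
  have : ∑ j ∈ Finset.range (n + 1),
      (if n < 2 * j then (n.choose j : ℝ) * ε ^ j * (1 - ε) ^ (n - j) else 0) =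
      ∑ y : Fin n → Bool, if n < 2 * countOnes y then
        ε ^ countOnes y * (1 - ε) ^ (n - countOnes y) else 0 := by
    rw [h]
    refine Finset.sum_congr rfl fun j _ => ?_
    split_ifs
    · ring
    · simp
  rw [this, eq_sub_iff_add_eq, pr, ← Finset.sum_add_distrib]
  trans ∑ y : Fin n → Bool, noiseWt ε (fun _ => false) y
  swap
  · exact noise_total ε _
  refine Finset.sum_congr rfl fun y _ => ?_
  rw [noise_zero]
  by_cases hc : n < 2 * countOnes y <;> simp [majn, hc]

lemma pr_nonneg {ε : ℝ} (h0 : 0 < ε) (h1 : ε < 1/2) {n : ℕ} (b : Bool) (x : Fin n → Bool) :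
    0 ≤ pr ε b x := by
  refine Finset.sum_nonneg fun y _ => mul_nonneg (noiseWt_nonneg h0 h1 _ _) ?_
  split_ifs <;> simp

lemma pr_le {ε : ℝ} (h0 : 0 < ε) (h1 : ε < 1/2) {n : ℕ} (x : Fin n → Bool) :
    pr ε false x ≤ pr ε false (fun _ : Fin n => false) := by
  apply noise_mono h0 h1
  intro y z hyz
  have : countOnes y ≤ countOnes z := by
    refine Finset.sum_le_sum fun i _ => ?_
    have := hyz i
    revert this
    cases y i <;> cases z i <;> simp
  simp only [majn, decide_eq_false_iff_not]
  split_ifs <;> first | omega | simp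

lemma countOnes_not {n : ℕ} (y : Fin n → Bool) :
    countOnes (fun i => !y i) + countOnes y = n := by
  unfold countOnes
  rw [← Finset.sum_add_distrib]
  trans ∑ i : Fin n, 1
  · refine Finset.sum_congr rfl fun i _ => ?_
    cases h : y i <;> simp [h]
  · simp

lemma pr_not {ε : ℝ} {n : ℕ} (hodd : Odd n) (x : Fin n → Bool) :
    pr ε true x = pr ε false (fun i => !x i) := by
  unfold pr
  refine Finset.sum_nbij' (fun y i => !y i) (fun y i => !y i) ?_ ?_ ?_ ?_ ?_
  · simp
  · simp
  · simp
  · simp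
  · intro y _
    congr 1
    · unfold noiseWt
      simp
    · have := countOnes_not y
      obtain ⟨m, hm⟩ := hodd
      simp only [majn, decide_eq_false_iff_not, decide_eq_true_eq]
      congr 1
      apply propext
      omega

lemma agree_eq_s11 (ε : ℝ) (n k : ℕ) (hk : 1 ≤ k) : agreeProb ε n k (fun _ => majn n) =
    ((2 : ℝ) ^ n)⁻¹ * ∑ x : Fin n → Bool, (pr ε true x ^ k + pr ε false x ^ k) := by
  unfold agreeProb
  congr 1
  refine Finset.sum_congr rfl fun x _ => ?_
  unfold pr
  rw [Fintype.sum_pow, Fintype.sum_pow, ← Finset.sum_add_distrib]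
  refine Finset.sum_congr rfl fun ys _ => ?_
  rw [Finset.prod_mul_distrib, Finset.prod_mul_distrib, ← mul_add]
  congr 1
  rw [Finset.prod_ite_zero, Finset.prod_ite_zero]
  simp only [Finset.prod_const_one, Finset.mem_univ, true_implies]
  let i0 : Fin k := ⟨0, hk⟩
  have key : ∀ b : Bool, majn n (ys i0) = b →
      ((∀ i j : Fin k, majn n (ys i) = majn n (ys j)) ↔ ∀ i, majn n (ys i) = b) := by
    intro b hb
    exact ⟨fun h i => (h i i0).trans hb, fun h i j => (h i).trans (h j).symm⟩
  cases hb : majn n (ys i0) with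
  | true =>
    have : ¬ ∀ i, majn n (ys i) = false := fun h => by simp [h i0] at hb
    rw [if_neg this, add_zero]
    simp only [key true hb]
  | false =>
    have : ¬ ∀ i, majn n (ys i) = true := fun h => by simp [h i0] at hb
    rw [if_neg this, zero_add]
    simp only [key false hb]

/-- With `q = 1 - Pr[Bin(n,ε) > n/2]`, the all-`Maj_n` protocol satisfies
`2^{1-n} q^k ≤ 𝒫_k(Maj_n; ε) ≤ 2 q^k`. -/
theorem statement11 (n : ℕ) (hn : 1 ≤ n) (hodd : Odd n) (k : ℕ) (hk : 1 ≤ k)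
    (ε : ℝ) (hε₀ : 0 < ε) (hε₁ : ε < 1 / 2) (q : ℝ)
    (hq : q = 1 - ∑ j ∈ Finset.range (n + 1),
      if n < 2 * j then (n.choose j : ℝ) * ε ^ j * (1 - ε) ^ (n - j) else 0) :
    2 / 2 ^ n * q ^ k ≤ agreeProb ε n k (fun _ => majn n) ∧
      agreeProb ε n k (fun _ => majn n) ≤ 2 * q ^ k := by

  rw [← pr_zero] at hq
  have hle : ∀ b (x : Fin n → Bool), pr ε b x ≤ q := by
    intro b x
    rw [hq]
    cases b
    · exact pr_le hε₀ hε₁ x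
    · rw [pr_not hodd]; exact pr_le hε₀ hε₁ _
  have hnn := fun b (x : Fin n → Bool) => pr_nonneg hε₀ hε₁ b x
  have hq0 : 0 ≤ q := hq ▸ hnn _ _
  have h2 : (0:ℝ) < 2 ^ n := by positivity
  rw [agree_eq_s11 ε n k hk]
  constructor
  · rw [div_eq_inv_mul, mul_assoc]
    refine mul_le_mul_of_nonneg_left ?_ (by positivity)
    rw [Finset.sum_add_distrib, two_mul]
    apply add_le_add
    · have : q = pr ε true (fun _ : Fin n => true) := by rw [pr_not hodd, hq]; rfl
      rw [this]
      exact Finset.single_le_sum (f := fun x : Fin n → Bool => pr ε true x ^ k)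
        (fun x _ => pow_nonneg (hnn _ _) _) (Finset.mem_univ _)
    · rw [hq]
      exact Finset.single_le_sum (f := fun x : Fin n → Bool => pr ε false x ^ k)
        (fun x _ => pow_nonneg (hnn _ _) _) (Finset.mem_univ _)
  · rw [inv_mul_le_iff₀ h2]
    calc _ ≤ ∑ x : Fin n → Bool, (2 * q ^ k) := by
          refine Finset.sum_le_sum fun x _ => ?_
          rw [two_mul]
          exact add_le_add (pow_le_pow_left₀ (hnn _ _) (hle _ _) _)
            (pow_le_pow_left₀ (hnn _ _) (hle _ _) _)
      _ = _ := by simp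
end

section
/- Fix k ≥ 1 and ε ∈ (0,1/2), and let c(ε) = 4ε(1−ε)/(1−2ε)^2. Then the limit of 𝒫_k(Maj_n;ε) as n → ∞ through odd values of n exists and equals 2·E[Φ(X/√c(ε))^k], where X is a standard normal random variable and Φ is the standard normal cumulative distribution function. -/
open Finset

open ProbabilityTheory MeasureTheory

/-- The standard normal cumulative distribution function. -/
noncomputable def stdNormalCDF (t : ℝ) : ℝ := (gaussianReal 0 1 (Set.Iic t)).toReal


lemma aux_factor (ε : ℝ) (t : ℝ) :
    (fun s : ℝ => ((1 - ε : ℂ) * Complex.exp (t * s * Complex.I) + ε * Complex.exp (-(t * s * Complex.I)))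
      - (1 + Complex.I * (1 - 2 * ε) * t * s - (1/2) * t ^ 2 * s ^ 2)) =O[nhds 0] fun s : ℝ => s ^ 3 := by
  have key : ∀ c : ℂ, (fun s : ℝ => Complex.exp (c * s) - (1 + c * s + (c * s) ^ 2 / 2)) =O[nhds 0]
      fun s : ℝ => s ^ 3 := by
    intro c
    have h := Complex.exp_sub_sum_range_isBigO_pow 3
    have ht : Filter.Tendsto (fun s : ℝ => c * (s : ℂ)) (nhds 0) (nhds 0) := by
      have : Continuous (fun s : ℝ => c * (s : ℂ)) := by fun_prop
      simpa using this.tendsto 0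
    have h2 := h.comp_tendsto ht
    have h3 : ((fun x : ℂ => x ^ 3) ∘ fun s : ℝ => c * (s : ℂ)) =O[nhds 0] fun s : ℝ => s ^ 3 := by
      refine Asymptotics.IsBigO.of_bound (‖c‖ ^ 3) (Filter.Eventually.of_forall fun s => ?_)
      simp [mul_pow]
    refine (h2.trans h3).congr_left fun s => ?_
    simp [Finset.sum_range_succ, Nat.factorial]
  have h1 := (key (t * Complex.I)).const_mul_left (1 - ε : ℂ)
  have h2 := (key (-(t * Complex.I))).const_mul_left (ε : ℂ)
  refine (h1.add h2).congr_left fun s => ?_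
  have e1 : (t * Complex.I * s : ℂ) = t * s * Complex.I := by ring
  have e2 : (-(t * Complex.I) * s : ℂ) = -(t * s * Complex.I) := by ring
  simp only [e1, e2]
  linear_combination (-(1/2) * t ^ 2 * s ^ 2 : ℂ) * Complex.I_sq

lemma aux_prod (ε : ℝ) {k : ℕ} (t : Fin k → ℝ) (S : Finset (Fin k)) :
    (fun s : ℝ => (∏ i ∈ S, ((1 - ε : ℂ) * Complex.exp (t i * s * Complex.I) + ε * Complex.exp (-(t i * s * Complex.I))))
      - (1 + Complex.I * (1 - 2 * ε) * (∑ i ∈ S, t i : ℝ) * s - (1/2) *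
        ((1 - 2 * ε) ^ 2 * (∑ i ∈ S, t i : ℝ) ^ 2 + (4 * ε * (1 - ε)) * (∑ i ∈ S, t i ^ 2 : ℝ)) * s ^ 2)) =O[nhds 0] fun s : ℝ => s ^ 3 := by
  induction S using Finset.induction_on with
  | empty => simpa using Asymptotics.isBigO_zero _ _
  | insert i S hi ih =>
    simp only [Finset.prod_insert hi, Finset.sum_insert hi]
    have hf := aux_factor ε (t i)
    have cont : ∀ f : ℝ → ℂ, Continuous f → f =O[nhds 0] (fun _ : ℝ => (1 : ℝ)) := fun f hf =>
      (hf.tendsto 0).isBigO_one ℝ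
    set T : ℝ := ∑ i ∈ S, t i
    set Q : ℝ := ∑ i ∈ S, t i ^ 2
    have h1 := (cont (fun s : ℝ => (1 - ε : ℂ) * Complex.exp (t i * s * Complex.I) + ε * Complex.exp (-(t i * s * Complex.I))) (by fun_prop)).mul ih
    have h2 := (cont (fun s : ℝ => (1 + Complex.I * (1 - 2 * ε) * T * s - (1/2) *
        ((1 - 2 * ε) ^ 2 * T ^ 2 + (4 * ε * (1 - ε)) * Q) * s ^ 2 : ℂ)) (by fun_prop)).mul hf
    have h4 : (fun s : ℝ => (s ^ 3 : ℂ)) =O[nhds 0] fun s : ℝ => s ^ 3 :=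
      Asymptotics.IsBigO.of_bound 1 (Filter.Eventually.of_forall fun s => by simp)
    have h3 := (cont (fun s : ℝ => 
        (-(1/2) * (Complex.I * (1 - 2 * ε) * T * t i ^ 2 + Complex.I * (1 - 2 * ε) * t i * ((1 - 2 * ε) ^ 2 * T ^ 2 + (4 * ε * (1 - ε)) * Q))
          + (1/4) * t i ^ 2 * ((1 - 2 * ε) ^ 2 * T ^ 2 + (4 * ε * (1 - ε)) * Q) * s : ℂ)) (by fun_prop)).mul h4
    simp only [one_mul] at h1 h2 h3
    refine ((h1.add h2).add h3).congr_left fun s => ?_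
    push_cast
    linear_combination (-(1 - 2 * ε) ^ 2 * T * t i * s ^ 2 : ℂ) * Complex.I_sq

/-- one-coordinate characteristic function -/
noncomputable def auxF (ε : ℝ) {k : ℕ} (t : Fin k → ℝ) (s : ℝ) : ℂ :=
  (1/2) * (∏ i, ((1 - ε : ℂ) * Complex.exp (t i * s * Complex.I) + ε * Complex.exp (-(t i * s * Complex.I))))
  + (1/2) * (∏ i, ((1 - ε : ℂ) * Complex.exp (-(t i * s * Complex.I)) + ε * Complex.exp (t i * s * Complex.I)))

lemma auxF_tendsto (ε : ℝ) {k : ℕ} (t : Fin k → ℝ) :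
    Filter.Tendsto (fun n : ℕ => auxF ε t (Real.sqrt n)⁻¹ ^ n) Filter.atTop
      (nhds (Complex.exp (-(1/2) *
        ((1 - 2 * ε) ^ 2 * (∑ i, t i : ℝ) ^ 2 + (4 * ε * (1 - ε)) * (∑ i, t i ^ 2 : ℝ))))) := by
  apply Complex.tendsto_pow_exp_of_isLittleO_sub_add_div
  have h := aux_prod ε t Finset.univ
  have hneg : Filter.Tendsto (fun s : ℝ => -s) (nhds 0) (nhds 0) := by
    simpa using (continuous_neg (G := ℝ)).tendsto 0
  have h' := h.comp_tendsto hneg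
  have h'' : ((fun s : ℝ => s ^ 3) ∘ fun s : ℝ => -s) =O[nhds 0] fun s : ℝ => s ^ 3 :=
    Asymptotics.IsBigO.of_bound 1 (Filter.Eventually.of_forall fun s => by simp)
  have h2 := (h.const_mul_left (1/2 : ℂ)).add ((h'.trans h'').const_mul_left (1/2 : ℂ))
  have h3 := h2.trans_isLittleO (Asymptotics.isLittleO_pow_pow (𝕜 := ℝ) (show 2 < 3 by norm_num))
  have ht : Filter.Tendsto (fun n : ℕ => (Real.sqrt n)⁻¹) Filter.atTop (nhds 0) :=
    tendsto_inv_atTop_zero.comp (Real.tendsto_sqrt_atTop.comp tendsto_natCast_atTop_atTop)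
  have h4 := h3.comp_tendsto ht
  rw [← Asymptotics.isLittleO_norm_right] at h4 ⊢
  refine (h4.congr_left fun n => ?_).congr_right fun n => ?_
  · simp only [Function.comp, auxF]
    have e : (((Real.sqrt n)⁻¹ : ℝ) : ℂ) ^ 2 = 1 / n := by
      rw [← Complex.ofReal_pow, inv_pow, Real.sq_sqrt (Nat.cast_nonneg n)]; simp
    push_cast at e ⊢
    simp only [mul_neg, neg_mul, neg_neg]
    rw [div_eq_mul_one_div _ (n : ℂ), ← e]
    ring
  · simp [Real.sq_sqrt]

noncomputable def limMap (a b : ℝ) (k : ℕ) (p : ℝ × (Fin k → ℝ)) : EuclideanSpace ℝ (Fin k) :=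
  WithLp.toLp 2 (fun i => a * p.1 + b * p.2 i)

lemma limMap_meas (a b : ℝ) (k : ℕ) : Measurable (limMap a b k) := by
  have : Continuous (limMap a b k) := by unfold limMap; fun_prop
  exact this.measurable

noncomputable def limMeas (a b : ℝ) (k : ℕ) : Measure (EuclideanSpace ℝ (Fin k)) :=
  ((gaussianReal 0 1).prod (Measure.pi fun _ : Fin k => gaussianReal 0 1)).map (limMap a b k)

instance (a b : ℝ) (k : ℕ) : IsProbabilityMeasure (limMeas a b k) :=
  Measure.isProbabilityMeasure_map (limMap_meas a b k).aemeasurable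

lemma charFun_limMeas (a b : ℝ) (k : ℕ) (t : EuclideanSpace ℝ (Fin k)) :
    charFun (limMeas a b k) t = Complex.exp (-(1/2) *
        (a ^ 2 * (∑ i, t i : ℝ) ^ 2 + b ^ 2 * (∑ i, t i ^ 2 : ℝ))) := by
  rw [charFun_apply, limMeas, integral_map (limMap_meas a b k).aemeasurable
    (by apply Continuous.aestronglyMeasurable; fun_prop)]
  have e : ∀ p : ℝ × (Fin k → ℝ), Complex.exp ((inner ℝ (limMap a b k p) t : ℝ) * Complex.I) =
      Complex.exp ((a * ∑ i, t i : ℝ) * p.1 * Complex.I) *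
        (∏ i, Complex.exp ((b * t i : ℝ) * p.2 i * Complex.I)) := by
    intro p
    rw [← Complex.exp_sum, ← Complex.exp_add]
    congr 1
    simp only [limMap, PiLp.inner_apply, RCLike.inner_apply, conj_trivial]
    push_cast
    simp only [mul_add, Finset.sum_add_distrib, Finset.sum_mul, Finset.mul_sum, add_mul]
    congr 1 <;> exact Finset.sum_congr rfl fun i _ => by ring
  simp_rw [e]
  rw [integral_prod_mul (fun x : ℝ => Complex.exp ((a * ∑ i, t i : ℝ) * x * Complex.I))
    (fun z : Fin k → ℝ => ∏ i, Complex.exp ((b * t i : ℝ) * z i * Complex.I)),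
    integral_fintype_prod_eq_prod (fun i (x : ℝ) => Complex.exp ((b * t i : ℝ) * x * Complex.I))]
  simp_rw [← charFun_apply_real, charFun_gaussianReal]
  rw [← Complex.exp_sum, ← Complex.exp_add]
  congr 1
  push_cast
  rw [mul_add]
  congr 1
  · ring
  · rw [Finset.mul_sum, Finset.mul_sum]
    exact Finset.sum_congr rfl fun i _ => by ring

def posSet (k : ℕ) : Set (EuclideanSpace ℝ (Fin k)) := {v | ∀ i, 0 < v i}

lemma posSet_open (k : ℕ) : IsOpen (posSet k) := by
  have : posSet k = ⋂ i, {v : EuclideanSpace ℝ (Fin k) | 0 < v i} := by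
    ext v; simp [posSet]
  rw [this]
  exact isOpen_iInter_of_finite fun i => isOpen_lt continuous_const (by fun_prop)

lemma limMeas_frontier (a b : ℝ) (hb : b ≠ 0) (k : ℕ) : limMeas a b k (frontier (posSet k)) = 0 := by
  have hsub : frontier (posSet k) ⊆ ⋃ i, {v : EuclideanSpace ℝ (Fin k) | v i = 0} := by
    intro v hv
    rw [(posSet_open k).frontier_eq] at hv
    have hc : IsClosed {v : EuclideanSpace ℝ (Fin k) | ∀ i, 0 ≤ v i} := by
      rw [Set.ofPred_forall]
      exact isClosed_iInter fun i => isClosed_le continuous_const (by fun_prop)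
    have h1 : v ∈ {v : EuclideanSpace ℝ (Fin k) | ∀ i, 0 ≤ v i} :=
      closure_minimal (fun w hw i => (hw i).le) hc hv.1
    have h2 := hv.2
    simp only [posSet, Set.mem_ofPred_eq, not_forall, not_lt] at h2
    obtain ⟨i, hi⟩ := h2
    exact Set.mem_iUnion.2 ⟨i, le_antisymm hi (h1 i)⟩
  refine measure_mono_null hsub (measure_iUnion_null fun i => ?_)
  have hm : MeasurableSet {v : EuclideanSpace ℝ (Fin k) | v i = 0} :=
    (isClosed_eq (by fun_prop) continuous_const).measurableSet
  rw [limMeas, Measure.map_apply (limMap_meas a b k) hm,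
    Measure.measure_prod_null (limMap_meas a b k hm)]
  refine Filter.Eventually.of_forall fun x => ?_
  have : NullSingletonClass (gaussianReal 0 1) := nullSingletonClass_gaussianReal (by norm_num)
  refine measure_mono_null ?_ (Measure.pi_hyperplane (fun _ : Fin k => gaussianReal 0 1) i (-(a * x) / b))
  intro z hz
  simp only [limMap, Set.mem_preimage, Set.mem_ofPred_eq] at hz ⊢
  field_simp
  linarith

lemma limMeas_pos (a b : ℝ) (hb : 0 < b) (k : ℕ) :
    (limMeas a b k (posSet k)).toReal =
      ∫ x : ℝ, (stdNormalCDF (x * a / b)) ^ k ∂(gaussianReal 0 1) := by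
  have hm := (posSet_open k).measurableSet
  have : NullSingletonClass (gaussianReal 0 1) := nullSingletonClass_gaussianReal (by norm_num)
  rw [limMeas, Measure.map_apply (limMap_meas a b k) hm,
    Measure.prod_apply (limMap_meas a b k hm)]
  have e : ∀ x : ℝ, (Measure.pi fun _ : Fin k => gaussianReal 0 1)
      (Prod.mk x ⁻¹' (limMap a b k ⁻¹' posSet k)) = gaussianReal 0 1 (Set.Iic (x * a / b)) ^ k := by
    intro x
    have : Prod.mk x ⁻¹' (limMap a b k ⁻¹' posSet k) = Set.univ.pi fun _ => Set.Ioi (-(x * a / b)) := by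
      ext z
      simp only [limMap, posSet, Set.mem_preimage, Set.mem_ofPred_eq, Set.mem_pi, Set.mem_univ, true_imp_iff, Set.mem_Ioi]
      refine forall_congr' fun i => ?_
      rw [neg_lt_iff_pos_add, ← mul_pos_iff_of_pos_left (b := z i + x * a / b) hb]
      have : b * (z i + x * a / b) = a * x + b * z i := by field_simp; ring
      rw [this]
    rw [this, Measure.pi_pi]
    simp only [Finset.prod_const, Finset.card_univ, Fintype.card_fin]
    congr 1
    have hneg : (gaussianReal 0 1).map (fun y => -y) = gaussianReal 0 1 := by
      rw [gaussianReal_map_neg]; simp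
    conv_lhs => rw [← hneg]
    rw [Measure.map_apply measurable_neg measurableSet_Ioi]
    rw [← measure_congr (Iio_ae_eq_Iic (μ := gaussianReal 0 1))]
    congr 1
    ext y; simp
  simp_rw [e]
  rw [integral_eq_lintegral_of_nonneg_ae]
  · congr 1
    refine lintegral_congr fun x => ?_
    rw [stdNormalCDF, ← ENNReal.toReal_pow, ENNReal.ofReal_toReal (by finiteness)]
  · exact Filter.Eventually.of_forall fun x => by unfold stdNormalCDF; positivity
  · have hmono : Monotone stdNormalCDF := fun x y hxy =>
      ENNReal.toReal_mono (by finiteness) (measure_mono (Set.Iic_subset_Iic.2 hxy))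
    exact ((hmono.measurable.comp (by fun_prop : Measurable fun x : ℝ => x * a / b)).pow_const k).aestronglyMeasurable

noncomputable def wt (ε : ℝ) (n k : ℕ) (x : Fin n → Bool) (ys : Fin k → Fin n → Bool) : ℝ :=
  ((2 : ℝ) ^ n)⁻¹ * ∏ i : Fin k, noiseWt ε x (ys i)

noncomputable def sg (b : Bool) : ℝ := if b then 1 else -1

noncomputable def Svec (n k : ℕ) (ys : Fin k → Fin n → Bool) : EuclideanSpace ℝ (Fin k) :=
  WithLp.toLp 2 (fun i => (Real.sqrt n)⁻¹ * ∑ j, sg (ys i j))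

noncomputable def discMeas (ε : ℝ) (n k : ℕ) : Measure (EuclideanSpace ℝ (Fin k)) :=
  ∑ p : (Fin n → Bool) × (Fin k → Fin n → Bool), ENNReal.ofReal (wt ε n k p.1 p.2) • Measure.dirac (Svec n k p.2)

lemma wt_nonneg {ε : ℝ} (h0 : 0 < ε) (h1 : ε < 1/2) (n k : ℕ) (x) (ys) : 0 ≤ wt ε n k x ys := by
  unfold wt noiseWt
  refine mul_nonneg (by positivity) (Finset.prod_nonneg fun i _ => Finset.prod_nonneg fun j _ => ?_)
  split_ifs <;> linarith

lemma sum_bool_pi {n : ℕ} (g : Fin n → Bool → ℂ) :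
    ∑ x : Fin n → Bool, ∏ j, g j (x j) = ∏ j, (g j true + g j false) := by
  have := (Finset.prod_univ_sum (fun _ : Fin n => (Finset.univ : Finset Bool)) g).symm
  rw [Fintype.piFinset_univ] at this
  simpa using this

lemma disc_sum (ε : ℝ) (n k : ℕ) (t : Fin k → ℝ) (s : ℝ) :
    ∑ p : (Fin n → Bool) × (Fin k → Fin n → Bool), (wt ε n k p.1 p.2 : ℂ) *
      ∏ i, ∏ j, Complex.exp (t i * (s * sg (p.2 i j)) * Complex.I) = auxF ε t s ^ n := by
  rw [Fintype.sum_prod_type]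
  have h1 : ∀ x : Fin n → Bool, ∑ ys : Fin k → Fin n → Bool, (wt ε n k x ys : ℂ) *
      ∏ i, ∏ j, Complex.exp (t i * (s * sg (ys i j)) * Complex.I) =
      ∏ j, ((1/2) * ∏ i, ((if true = x j then 1 - ε else ε : ℂ) * Complex.exp (t i * s * Complex.I) +
        (if false = x j then 1 - ε else ε : ℂ) * Complex.exp (-(t i * s * Complex.I)))) := by
    intro x
    rw [Finset.prod_mul_distrib, Finset.prod_comm]
    have h2 : ∀ i : Fin k, ∏ j, ((if true = x j then 1 - ε else ε : ℂ) * Complex.exp (t i * s * Complex.I) +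
        (if false = x j then 1 - ε else ε : ℂ) * Complex.exp (-(t i * s * Complex.I))) =
        ∑ y : Fin n → Bool, ∏ j, ((if y j = x j then 1 - ε else ε : ℂ) * Complex.exp (t i * (s * sg (y j)) * Complex.I)) := by
      intro i
      rw [sum_bool_pi (fun j b => (if b = x j then 1 - ε else ε : ℂ) * Complex.exp (t i * (s * sg b) * Complex.I))]
      simp [sg]
    simp_rw [h2]
    rw [Finset.prod_univ_sum (fun _ : Fin k => (Finset.univ : Finset (Fin n → Bool)))]
    simp only [Fintype.piFinset_univ, Finset.mul_sum]
    refine Finset.sum_congr rfl fun ys _ => ?_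
    simp only [wt, noiseWt, Finset.prod_mul_distrib]
    push_cast
    simp only [apply_ite (fun r : ℝ => (r : ℂ))]
    simp [mul_assoc]
  simp_rw [h1]
  rw [sum_bool_pi (fun j b => (1/2 : ℂ) * ∏ i, ((if true = b then 1 - ε else ε : ℂ) * Complex.exp (t i * s * Complex.I) +
        (if false = b then 1 - ε else ε : ℂ) * Complex.exp (-(t i * s * Complex.I))))]
  simp only [Finset.prod_const, Finset.card_univ, Fintype.card_fin, auxF]
  congr 1
  simp [add_comm]

lemma wt_sum (ε : ℝ) (n k : ℕ) :
    ∑ p : (Fin n → Bool) × (Fin k → Fin n → Bool), wt ε n k p.1 p.2 = 1 := by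
  have h := disc_sum ε n k (fun _ => 0) 0
  simp [auxF] at h
  norm_num at h
  exact_mod_cast h

lemma disc_prob {ε : ℝ} (h0 : 0 < ε) (h1 : ε < 1/2) (n k : ℕ) : IsProbabilityMeasure (discMeas ε n k) := by
  constructor
  simp only [discMeas, Measure.coe_finsetSum, Finset.sum_apply, Measure.smul_apply, smul_eq_mul, measure_univ, mul_one]
  rw [← ENNReal.ofReal_sum_of_nonneg (fun p _ => wt_nonneg h0 h1 n k _ _), wt_sum]
  simp

lemma disc_charFun {ε : ℝ} (h0 : 0 < ε) (h1 : ε < 1/2) (n k : ℕ) (t : EuclideanSpace ℝ (Fin k)) :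
    charFun (discMeas ε n k) t = auxF ε t (Real.sqrt n)⁻¹ ^ n := by
  rw [← disc_sum, charFun_apply, discMeas, integral_finsetSum_measure]
  · refine Finset.sum_congr rfl fun p _ => ?_
    rw [integral_smul_measure, integral_dirac, ENNReal.toReal_ofReal (wt_nonneg h0 h1 n k _ _)]
    simp only [Complex.real_smul]
    congr 1
    simp_rw [← Complex.exp_sum]
    congr 1
    simp only [Svec, PiLp.inner_apply, RCLike.inner_apply, conj_trivial]
    push_cast
    simp only [Finset.mul_sum, Finset.sum_mul]
  · intro p _
    refine Integrable.smul_measure ?_ (by finiteness)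
    exact integrable_dirac (by simp)

lemma maj_iff {n : ℕ} (y : Fin n → Bool) : majn n y = true ↔ 0 < ∑ j, sg (y j) := by
  have h : ∑ j, sg (y j) = 2 * (countOnes y : ℝ) - n := by
    have h1 : ∀ b : Bool, sg b = 2 * ((cond b 1 0 : ℕ) : ℝ) - 1 := by
      intro b; cases b <;> norm_num [sg]
    simp only [h1, countOnes, Finset.sum_sub_distrib, ← Finset.mul_sum]
    simp
  rw [h, majn, decide_eq_true_iff, sub_pos]
  exact_mod_cast Iff.rfl

lemma disc_pos {ε : ℝ} (h0 : 0 < ε) (h1 : ε < 1/2) (n k : ℕ) (hn : 0 < n) :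
    (discMeas ε n k (posSet k)).toReal = ∑ p : (Fin n → Bool) × (Fin k → Fin n → Bool), 
      wt ε n k p.1 p.2 * (if ∀ i, majn n (p.2 i) = true then 1 else 0) := by
  have hm := (posSet_open k).measurableSet
  simp only [discMeas, Measure.coe_finsetSum, Finset.sum_apply, Measure.smul_apply, smul_eq_mul]
  rw [ENNReal.toReal_sum (fun p _ => by finiteness)]
  refine Finset.sum_congr rfl fun p _ => ?_
  rw [ENNReal.toReal_mul, ENNReal.toReal_ofReal (wt_nonneg h0 h1 n k _ _), Measure.dirac_apply' _ hm]
  congr 1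
  have : Svec n k p.2 ∈ posSet k ↔ ∀ i, majn n (p.2 i) = true := by
    simp only [posSet, Svec, Set.mem_ofPred_eq]
    refine forall_congr' fun i => ?_
    rw [maj_iff, mul_pos_iff_of_pos_left (by positivity)]
  by_cases h : Svec n k p.2 ∈ posSet k
  · rw [if_pos (this.1 h)]; simp [h]
  · rw [if_neg (fun h' => h (this.2 h'))]; simp [h]

lemma maj_not {n : ℕ} (hn : Odd n) (y : Fin n → Bool) : majn n (fun j => !(y j)) = !(majn n y) := by
  have h : countOnes (fun j => !(y j)) + countOnes y = n := by
    unfold countOnes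
    rw [← Finset.sum_add_distrib]
    have : ∀ j, (cond (!(y j)) 1 0 : ℕ) + cond (y j) 1 0 = 1 := by
      intro j; cases y j <;> rfl
    rw [Finset.sum_congr rfl fun j _ => this j]
    simp
  obtain ⟨m, hm⟩ := hn
  unfold majn
  by_cases h2 : n < 2 * countOnes y
  · simp [h2]; omega
  · simp [h2]; omega

lemma agree_eq_s15 (ε : ℝ) (n k : ℕ) (hk : 1 ≤ k) (hn : Odd n) :
    agreeProb ε n k (fun _ => majn n) = 2 * ∑ p : (Fin n → Bool) × (Fin k → Fin n → Bool), 
      wt ε n k p.1 p.2 * (if ∀ i, majn n (p.2 i) = true then 1 else 0) := by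
  have hflip : ∑ p : (Fin n → Bool) × (Fin k → Fin n → Bool), 
      wt ε n k p.1 p.2 * (if ∀ i, majn n (p.2 i) = false then 1 else 0) =
      ∑ p : (Fin n → Bool) × (Fin k → Fin n → Bool), 
      wt ε n k p.1 p.2 * (if ∀ i, majn n (p.2 i) = true then 1 else 0) := by
    have hinv : Function.Involutive (fun p : (Fin n → Bool) × (Fin k → Fin n → Bool) =>
      ((fun j => !(p.1 j), fun i j => !(p.2 i j)) : (Fin n → Bool) × (Fin k → Fin n → Bool))) := by
      intro p; simp
    refine Fintype.sum_bijective _ hinv.bijective _ _ fun p => ?_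
    simp only [maj_not hn, wt, noiseWt]
    simp
  rw [two_mul]
  nth_rewrite 1 [← hflip]
  rw [← Finset.sum_add_distrib, agreeProb, Fintype.sum_prod_type, Finset.mul_sum]
  refine Finset.sum_congr rfl fun x _ => ?_
  rw [Finset.mul_sum]
  refine Finset.sum_congr rfl fun ys _ => ?_
  rw [← mul_assoc, ← mul_add]
  change wt ε n k x ys * _ = _
  congr 1
  let i0 : Fin k := ⟨0, hk⟩
  by_cases h : ∀ i j, majn n (ys i) = majn n (ys j)
  · rw [if_pos h]
    cases hb : majn n (ys i0)
    · rw [if_pos (fun i => (h i i0).trans hb), if_neg (fun h' => by simpa [hb] using h' i0)]; simp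
    · rw [if_neg (fun h' => by simpa [hb] using h' i0), if_pos (fun i => (h i i0).trans hb)]; simp
  · rw [if_neg h, if_neg (fun h' => h fun i j => (h' i).trans (h' j).symm),
      if_neg (fun h' => h fun i j => (h' i).trans (h' j).symm)]; simp

theorem statement15 (k : ℕ) (hk : 1 ≤ k) (ε : ℝ) (hε₀ : 0 < ε) (hε₁ : ε < 1 / 2) :
    Filter.Tendsto (fun n : ℕ => agreeProb ε n k (fun _ => majn n))
      (Filter.atTop ⊓ Filter.principal {n : ℕ | Odd n})
      (nhds (2 * ∫ x : ℝ,
        (stdNormalCDF (x / Real.sqrt (4 * ε * (1 - ε) / (1 - 2 * ε) ^ 2))) ^ k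
          ∂(gaussianReal 0 1))) := by
  have hv : 0 < 4 * ε * (1 - ε) := by
    have : 0 < 1 - ε := by linarith
    positivity
  have ha : 0 < 1 - 2 * ε := by linarith
  set b := Real.sqrt (4 * ε * (1 - ε)) with hb
  have hbpos : 0 < b := Real.sqrt_pos.2 hv
  have hb2 : b ^ 2 = 4 * ε * (1 - ε) := Real.sq_sqrt hv.le
  let μ₀ : ProbabilityMeasure (EuclideanSpace ℝ (Fin k)) := ⟨limMeas (1 - 2 * ε) b k, inferInstance⟩
  let μ : ℕ → ProbabilityMeasure (EuclideanSpace ℝ (Fin k)) :=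
    fun n => ⟨discMeas ε n k, disc_prob hε₀ hε₁ n k⟩
  have hlim : Filter.Tendsto μ Filter.atTop (nhds μ₀) := by
    refine ProbabilityMeasure.tendsto_of_tendsto_charFun fun t => ?_
    change Filter.Tendsto (fun n => charFun (discMeas ε n k) t) Filter.atTop
      (nhds (charFun (limMeas (1 - 2 * ε) b k) t))
    simp_rw [disc_charFun hε₀ hε₁, charFun_limMeas]
    have hbC : (b : ℂ) ^ 2 = 4 * ε * (1 - ε) := by exact_mod_cast hb2
    rw [hbC]
    have := auxF_tendsto ε t
    push_cast at this ⊢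
    exact this
  have h1 := ProbabilityMeasure.tendsto_measure_of_null_frontier_of_tendsto' hlim
    (E := posSet k) (limMeas_frontier _ b hbpos.ne' k)
  have h2 := (ENNReal.tendsto_toReal (measure_ne_top _ _)).comp h1
  have h3 : (((μ₀ : Measure (EuclideanSpace ℝ (Fin k))) (posSet k)).toReal) = ∫ x : ℝ,
        (stdNormalCDF (x / Real.sqrt (4 * ε * (1 - ε) / (1 - 2 * ε) ^ 2))) ^ k
          ∂(gaussianReal 0 1) := by
    refine (limMeas_pos (1 - 2 * ε) b hbpos k).trans ?_
    rw [Real.sqrt_div hv.le, Real.sqrt_sq ha.le, ← hb]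
    simp_rw [div_div_eq_mul_div]
  rw [h3] at h2
  refine ((h2.const_mul 2).mono_left inf_le_left).congr' ?_
  rw [Filter.EventuallyEq, Filter.eventually_inf_principal]
  refine Filter.Eventually.of_forall fun n hn => ?_
  rw [agree_eq_s15 ε n k hk hn, ← disc_pos hε₀ hε₁ n k hn.pos]
  rfl
end

section
/- There exist n ≥ 1, k ≥ 1, ε ∈ (0,1/2) and a balanced function f : {0,1}^n → {0,1} such that Pr[f(y^1) = ⋯ = f(y^k) = 1] ≠ Pr[f(y^1) = ⋯ = f(y^k) = 0]. (For instance, n = 5, k = 3, and the left-monotone balanced function whose minimal 1-inputs are 10010 and 01101 is such an example for generic ε.) -/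
open Finset

/-- The probability that all `k` parties output the bit `b`. -/
noncomputable def allEqProb (ε : ℝ) (n k : ℕ) (fs : Fin k → (Fin n → Bool) → Bool)
    (b : Bool) : ℝ :=
  ((2 : ℝ) ^ n)⁻¹ * ∑ x : Fin n → Bool, ∑ ys : Fin k → Fin n → Bool,
    (∏ i : Fin k, noiseWt ε x (ys i)) * (if ∀ i : Fin k, fs i (ys i) = b then 1 else 0)

/-- Integer version of the noise weight at `ε = 1/4`. -/
def wtN (x y : Fin 4 → Bool) : ℕ := ∏ j : Fin 4, if y j = x j then 3 else 1

/-- The example function. -/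
def exF (x : Fin 4 → Bool) : Bool :=
  decide ((x 0).toNat + 2 * (x 1).toNat + 4 * (x 2).toNat + 8 * (x 3).toNat ∈
    [0, 1, 2, 3, 4, 5, 8, 14])

/-- Integer version of the agreement probability. -/
def cntN (b : Bool) : ℕ :=
  ∑ x : Fin 4 → Bool, (∑ y : Fin 4 → Bool, wtN x y * (if exF y = b then 1 else 0)) ^ 3

theorem noiseWt_eq (x y : Fin 4 → Bool) : noiseWt (1 / 4) x y = (wtN x y : ℝ) * (1 / 4) ^ 4 := by
  unfold noiseWt wtN
  have h : ∀ j : Fin 4, (if y j = x j then 1 - (1 / 4 : ℝ) else 1 / 4) =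
      ((if y j = x j then 3 else 1 : ℕ) : ℝ) * (1 / 4) := by
    intro j
    split_ifs <;> norm_num
  rw [Finset.prod_congr rfl (fun j _ => h j), Finset.prod_mul_distrib]
  simp

theorem allEq_eq (b : Bool) : allEqProb (1 / 4) 4 3 (fun _ => exF) b =
    ((2 : ℝ) ^ 4)⁻¹ * (((1 / 4) ^ 4) ^ 3 * (cntN b : ℝ)) := by
  unfold allEqProb cntN
  congr 1
  push_cast
  rw [Finset.mul_sum]
  refine Finset.sum_congr rfl fun x _ => ?_
  rw [← mul_pow, Finset.mul_sum]
  have key : ∀ ys : Fin 3 → Fin 4 → Bool,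
      (∏ i : Fin 3, noiseWt (1 / 4) x (ys i)) * (if ∀ i : Fin 3, exF (ys i) = b then 1 else 0) =
      ∏ i : Fin 3, ((1 / 4 : ℝ) ^ 4 * ((wtN x (ys i) : ℝ) * (if exF (ys i) = b then 1 else 0))) := by
    intro ys
    rw [show (if ∀ i : Fin 3, exF (ys i) = b then (1 : ℝ) else 0) =
      ∏ i : Fin 3, (if exF (ys i) = b then (1 : ℝ) else 0) by
        rw [Finset.prod_ite_zero]; simp, ← Finset.prod_mul_distrib]
    refine Finset.prod_congr rfl fun i _ => ?_
    rw [noiseWt_eq]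
    ring
  rw [Finset.sum_congr rfl (fun ys _ => key ys), Fintype.sum_pow]

/-- There is a balanced function for which the probability that all parties agree on `1`
differs from the probability that all parties agree on `0`. -/
theorem statement18 :
    ∃ (n k : ℕ) (ε : ℝ) (f : (Fin n → Bool) → Bool),
      1 ≤ n ∧ 1 ≤ k ∧ 0 < ε ∧ ε < 1 / 2 ∧ BalancedFn f ∧
        allEqProb ε n k (fun _ => f) true ≠ allEqProb ε n k (fun _ => f) false := by
  refine ⟨4, 3, 1 / 4, exF, by norm_num, by norm_num, by norm_num, by norm_num, ?_, ?_⟩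
  · unfold BalancedFn
    decide +kernel
  · rw [allEq_eq, allEq_eq]
    have h : cntN true ≠ cntN false := by decide +kernel
    intro e
    apply h
    have e1 := mul_left_cancel₀ (by positivity) e
    have e2 := mul_left_cancel₀ (by positivity) e1
    exact_mod_cast e2
end
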